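/- Let V be a finite type, K an abstract simplicial complex on V, and S ⊆ V. The restriction map res : (V → ℂ) → (S → ℂ), res z = z|_S, is continuous, maps Z_K into Z_{K_S}, and satisfies res(ext z) = z for every z ∈ (S → ℂ), where ext is the extension-by-1 map. Consequently Z_{K_S}, embedded into Z_K via ext, is a retract of Z_K: res is a continuous retraction of the embedding ext : Z_{K_S} → Z_K. -/

import Mathlib

open scoped Classical

/-- The moment-angle complex of a simplicial complex `K` on the vertex type `V`, as a
subset of `V → ℂ`. -/
def momentAngleComplex {V : Type*} (K : Set (Finset V)) : Set (V → ℂ) :=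
  {z | ∃ σ ∈ K, (∀ v ∈ σ, ‖z v‖ ≤ 1) ∧ (∀ v ∉ σ, ‖z v‖ = 1)}

/-- The moment-angle complex of the full subcomplex `K_S`, as a subset of `S → ℂ`. -/
def momentAngleComplexSub {V : Type*} (K : Set (Finset V)) (S : Set V) : Set (S → ℂ) :=
  {z | ∃ σ ∈ K, (↑σ : Set V) ⊆ S ∧
    ∀ v : S, ((v : V) ∈ σ → ‖z v‖ ≤ 1) ∧ ((v : V) ∉ σ → ‖z v‖ = 1)}

/-- The extension-by-1 map `ext : (S → ℂ) → (V → ℂ)`. -/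
noncomputable def extMap {V : Type*} (S : Set V) (z : S → ℂ) : V → ℂ :=
  fun v => if h : v ∈ S then z ⟨v, h⟩ else 1

/-- The restriction map `res : (V → ℂ) → (S → ℂ)`, `res z = z|_S`. -/
def resMap {V : Type*} (S : Set V) (z : V → ℂ) : S → ℂ :=
  fun v => z v

/-- The extension map sends `Z_{K_S}` into `Z_K`. -/
theorem extMap_mem_momentAngleComplex {V : Type*} (K : Set (Finset V)) (S : Set V)
    (z : S → ℂ) (hz : z ∈ momentAngleComplexSub K S) :
    extMap S z ∈ momentAngleComplex K := by
  obtain ⟨σ, hσ, hS, h⟩ := hz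
  refine ⟨σ, hσ, fun v hv => ?_, fun v hv => ?_⟩
  · have hvS : v ∈ S := hS hv
    simpa [extMap, hvS] using (h ⟨v, hvS⟩).1 hv
  · by_cases hvS : v ∈ S
    · simpa [extMap, hvS] using (h ⟨v, hvS⟩).2 hv
    · simp [extMap, hvS]

/-- The extension map is a topological embedding. -/
theorem extMap_isEmbedding {V : Type*} (S : Set V) :
    Topology.IsEmbedding (extMap S) := by
  have hres : Continuous (resMap S) := continuous_pi fun v => continuous_apply (v : V)
  have hext : Continuous (extMap S) := by
    refine continuous_pi fun v => ?_
    by_cases hv : v ∈ S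
    · simpa [extMap, hv] using continuous_apply (⟨v, hv⟩ : S)
    · simpa [extMap, hv] using continuous_const
  have hleft : Function.LeftInverse (resMap S) (extMap S) := by
    intro z
    funext v
    simp [resMap, extMap]
  exact hleft.isEmbedding hres hext

/-- The restriction map `res : (V → ℂ) → (S → ℂ)` is continuous, maps
`Z_K` into `Z_{K_S}`, and satisfies `res (ext z) = z` for every `z : S → ℂ`.
Consequently `Z_{K_S}`, embedded into `Z_K` via `ext`, is a retract of `Z_K`: `res` is a
continuous retraction of the embedding `ext : Z_{K_S} → Z_K`. -/
theorem resMap_retraction_of_full_subcomplex {V : Type*} [Fintype V]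
    (K : Set (Finset V))
    (hdown : ∀ σ ∈ K, ∀ τ ⊆ σ, τ ∈ K)
    (hempty : (∅ : Finset V) ∈ K)
    (hvert : ∀ v : V, ({v} : Finset V) ∈ K)
    (S : Set V) :
    Continuous (resMap S) ∧
      (∀ z ∈ momentAngleComplex K, resMap S z ∈ momentAngleComplexSub K S) ∧
      (∀ z : S → ℂ, resMap S (extMap S z) = z) := by
  refine ⟨?_, ?_, ?_⟩
  · exact continuous_pi fun v => continuous_apply (v : V)
  · rintro z ⟨σ, hσ, h1, h2⟩
    refine ⟨σ.filter (· ∈ S), hdown σ hσ _ (Finset.filter_subset _ _), ?_, ?_⟩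
    · intro v hv
      exact (Finset.mem_filter.mp (Finset.mem_coe.mp hv)).2
    · intro v
      refine ⟨fun hv => h1 v (Finset.mem_filter.mp hv).1, fun hv => h2 v fun h => ?_⟩
      exact hv (Finset.mem_filter.mpr ⟨h, v.2⟩)
  · intro z
    funext v
    simp [resMap, extMap]
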